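/- If a_1, …, a_m is a nontrivial cycle of T of length m (i.e., a_i ≠ 1 for all i) with a_min ≥ 19·2^58 and m·log₂(1 + 1/(3·a_min)) > 1 (an α-loop), then m ≥ 11387806137299329586. -/

import Mathlib

/-- The Collatz odd-step map: `T x = (3x+1)/2^{v₂(3x+1)}`. -/
def T (x : ℕ) : ℕ := (3 * x + 1) / 2 ^ (padicValNat 2 (3 * x + 1))

/-! Lane-parallel verification of the Collatz iteration on a short interval, done with big numbers. -/

namespace CollatzLane

/-- Evaluate `x` before passing it on. -/
noncomputable def force {α : Type} (x : ℕ) (f : ℕ → α) : α :=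
  Nat.rec (motive := fun _ => α) (f 0) (fun n _ => f (Nat.add n 1)) x

theorem force_eq {α : Type} (x : ℕ) (f : ℕ → α) : force x f = f x := by
  cases x <;> rfl

/-- The shortcut Collatz map. -/
def U (x : ℕ) : ℕ := if x % 2 = 0 then x / 2 else (3 * x + 1) / 2

/-- One step in all lanes (each lane has 128 bits). -/
def sstep (M X : ℕ) : ℕ :=
  Nat.add (Nat.shiftRight (Nat.add X (Nat.land X M)) 1)
    (Nat.land X (Nat.mul (Nat.land X M) 340282366920938463463374607431768211455))

noncomputable def block (M : ℕ) (f : ℕ → Bool) (k : ℕ) : ℕ → Bool :=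
  Nat.rec (motive := fun _ => ℕ → Bool) f (fun _ ih X => force (sstep M X) ih) k

noncomputable def loop (M H S : ℕ) (fuel : ℕ) : ℕ → Bool :=
  Nat.rec (motive := fun _ => ℕ → Bool) (fun _ => false)
    (fun _ ih X => cond (Nat.beq (Nat.land X H) 0) true
      (cond (Nat.beq (Nat.land X S) 0) (block M ih 16 X) false)) fuel

/-- Check all numbers `b + 4096 * t`, `t < L`. -/
noncomputable def chk (L b : ℕ) : Bool :=
  force (Nat.pow 340282366920938463463374607431768211456 L) fun P =>
  force (Nat.div (Nat.sub P 1) 340282366920938463463374607431768211455) fun M =>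
  force (Nat.div (Nat.sub (Nat.mul L P) (Nat.mul 340282366920938463463374607431768211456 M))
    340282366920938463463374607431768211455) fun R =>
  force (Nat.mul (2 ^ 128 - 2 ^ 62) M) fun H =>
  force (Nat.mul (2 ^ 128 - 2 ^ 96) M) fun S =>
  force (Nat.add (Nat.mul b M) (Nat.mul 4096 R)) fun X =>
  loop M H S 30 X

/-- Residue classes mod 4096 that are seen to drop within 12 steps. -/
noncomputable def dead (fuel : ℕ) : ℕ → ℕ → Bool :=
  Nat.rec (motive := fun _ => ℕ → ℕ → Bool) (fun _ _ => false)
    (fun _ ih p q =>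
      cond (Nat.beq (Nat.mod p 2) 0)
        (cond (Nat.beq (Nat.mod q 2) 0)
          (cond (Nat.ble (p / 2) 4095 && Nat.ble (q / 2) (2 ^ 40)) true (ih (p / 2) (q / 2)))
          (cond (Nat.ble (3 * p / 2) 4095 && Nat.ble ((3 * q + 1) / 2) (2 ^ 40)) true
            (ih (3 * p / 2) ((3 * q + 1) / 2))))
        false) fuel

/-- Packing a list of lanes into one number. -/
def pack : List ℕ → ℕ
  | [] => 0
  | x :: l => x + 2 ^ 128 * pack l

theorem land_split (w a b c d : ℕ) (ha : a < 2 ^ w) (hc : c < 2 ^ w) :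
    (a + 2 ^ w * b) &&& (c + 2 ^ w * d) = (a &&& c) + 2 ^ w * (b &&& d) := by
  apply Nat.eq_of_testBit_eq
  intro i
  have h : (a &&& c) < 2 ^ w := lt_of_le_of_lt Nat.and_le_left ha
  rw [Nat.testBit_and, add_comm a, add_comm c, add_comm (a &&& c),
    Nat.testBit_two_pow_mul_add _ ha, Nat.testBit_two_pow_mul_add _ hc,
    Nat.testBit_two_pow_mul_add _ h]
  split_ifs <;> simp [Nat.testBit_and]

theorem pack_land (l : List ℕ) (f g : ℕ → ℕ) (hf : ∀ x ∈ l, f x < 2 ^ 128)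
    (hg : ∀ x ∈ l, g x < 2 ^ 128) :
    pack (l.map f) &&& pack (l.map g) = pack (l.map fun x => f x &&& g x) := by
  induction l with
  | nil => simp [pack]
  | cons x l ih =>
    simp only [List.map_cons, pack]
    rw [land_split 128 _ _ _ _ (hf x (by simp)) (hg x (by simp)),
      ih (fun y hy => hf y (by simp [hy])) (fun y hy => hg y (by simp [hy]))]

theorem pack_add (l : List ℕ) (f g : ℕ → ℕ) :
    pack (l.map f) + pack (l.map g) = pack (l.map fun x => f x + g x) := by
  induction l with
  | nil => simp [pack]
  | cons x l ih =>
    simp only [List.map_cons, pack, ← ih]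
    ring

theorem pack_mul (l : List ℕ) (f : ℕ → ℕ) (c : ℕ) :
    pack (l.map f) * c = pack (l.map fun x => f x * c) := by
  induction l with
  | nil => simp [pack]
  | cons x l ih =>
    simp only [List.map_cons, pack, ← ih]
    ring

theorem pack_congr (l : List ℕ) (f g : ℕ → ℕ) (h : ∀ x ∈ l, f x = g x) :
    pack (l.map f) = pack (l.map g) := by
  rw [List.map_congr_left h]

theorem pack_id (l : List ℕ) : pack l = pack (l.map fun x => x) := by simp

theorem pack_eq_zero (l : List ℕ) (f : ℕ → ℕ) (h : pack (l.map f) = 0) :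
    ∀ x ∈ l, f x = 0 := by
  induction l with
  | nil => simp
  | cons x l ih =>
    simp only [List.map_cons, pack] at h
    have h1 : f x = 0 := by omega
    have h2 : pack (l.map f) = 0 := by omega
    intro y hy
    rcases List.mem_cons.1 hy with rfl | hy
    · exact h1
    · exact ih h2 y hy

theorem sstep_pack (l : List ℕ) (h : ∀ x ∈ l, x < 2 ^ 128) :
    sstep (pack (l.map fun _ => 1)) (pack l) = pack (l.map U) := by
  have e : sstep (pack (l.map fun _ => 1)) (pack l) =
      (pack l + (pack l &&& pack (l.map fun _ => 1))) >>> 1 +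
      (pack l &&& ((pack l &&& pack (l.map fun _ => 1)) * (2 ^ 128 - 1))) := rfl
  rw [e]
  have h1 : pack l &&& pack (l.map fun _ => 1) = pack (l.map fun x => x % 2) := by
    conv_lhs => rw [pack_id l]
    rw [pack_land l _ _ h (by intros; norm_num)]
    exact pack_congr _ _ _ fun x _ => Nat.and_one_is_mod x
  rw [h1, pack_mul]
  conv_lhs => rw [pack_id l]
  rw [pack_land l _ _ h (by intro x _; have := Nat.mod_lt x (y := 2) (by norm_num); omega),
    pack_add, Nat.shiftRight_eq_div_pow]
  have h2 : pack (l.map fun x => x + x % 2) = pack (l.map fun x => (x + x % 2) / 2) * 2 ^ 1 := by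
    rw [pack_mul]
    exact pack_congr _ _ _ fun x _ => by omega
  rw [h2, Nat.mul_div_cancel _ (by norm_num), pack_add]
  refine pack_congr _ _ _ fun x hx => ?_
  unfold U
  rcases Nat.mod_two_eq_zero_or_one x with h0 | h0
  · simp [h0]
  · have := h x hx
    rw [h0, one_mul, Nat.and_two_pow_sub_one_eq_mod, Nat.mod_eq_of_lt this]
    simp
    omega

theorem mask_lt (s k x : ℕ) (hx : x < 2 ^ (s + k)) (h : x &&& (2 ^ (s + k) - 2 ^ s) = 0) :
    x < 2 ^ s := by
  have e : 2 ^ (s + k) - 2 ^ s = 0 + 2 ^ s * (2 ^ k - 1) := by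
    rw [pow_add, Nat.mul_sub]; simp
  rw [e, ← Nat.mod_add_div x (2 ^ s), land_split _ _ _ _ _ (Nat.mod_lt _ (by positivity))
    (by positivity), Nat.and_two_pow_sub_one_eq_mod] at h
  have h2 : x / 2 ^ s < 2 ^ k := by
    rw [Nat.div_lt_iff_lt_mul (by positivity), mul_comm, ← pow_add]; exact hx
  rw [Nat.mod_eq_of_lt h2] at h
  have h3 : x / 2 ^ s = 0 := by
    have : 0 < 2 ^ s := by positivity
    have h4 : 2 ^ s * (x / 2 ^ s) = 0 := by omega
    rcases Nat.mul_eq_zero.1 h4 with h | h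
    · omega
    · exact h
  exact (Nat.div_eq_zero_iff.1 h3).resolve_left (by positivity)

/-- The iteration from `x` gets below `2 ^ 62`. -/
def Drops (x : ℕ) : Prop := ∃ k, U^[k] x < 2 ^ 62

theorem Drops.of_U {x : ℕ} (h : Drops (U x)) : Drops x := by
  obtain ⟨k, hk⟩ := h
  exact ⟨k + 1, by simpa [Function.iterate_succ_apply] using hk⟩

theorem U_lt {x s : ℕ} (h : x < 2 ^ s) : U x < 2 ^ (s + 1) := by
  unfold U
  rw [pow_succ]
  split_ifs <;> omega

theorem block_sound (f : ℕ → Bool) (n : ℕ)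
    (hf : ∀ l : List ℕ, l.length = n → (∀ x ∈ l, x < 2 ^ 128) → f (pack l) = true →
      ∀ x ∈ l, Drops x) (k : ℕ) :
    ∀ l : List ℕ, l.length = n → (∀ x ∈ l, x < 2 ^ (128 - k)) → k ≤ 100 →
      block (pack (List.replicate n 1)) f k (pack l) = true → ∀ x ∈ l, Drops x := by
  induction k with
  | zero => intro l hl hb _ h; exact hf l hl hb h
  | succ k ih =>
    intro l hl hb hk h
    have e : block (pack (List.replicate n 1)) f (k + 1) (pack l) =
      force (sstep (pack (List.replicate n 1)) (pack l))
        (block (pack (List.replicate n 1)) f k) := rfl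
    have e2 : List.replicate n 1 = l.map fun _ => 1 := by simp [hl]
    rw [e, force_eq] at h
    nth_rewrite 2 [e2] at h
    rw [sstep_pack l (fun x hx => lt_of_lt_of_le (hb x hx)
      (Nat.pow_le_pow_right (by norm_num) (by omega)))] at h
    intro x hx
    apply Drops.of_U
    refine ih (l.map U) (by simp [hl]) ?_ (by omega) h (U x) (List.mem_map_of_mem hx)
    intro y hy
    obtain ⟨z, hz, rfl⟩ := List.mem_map.1 hy
    have := U_lt (hb z hz)
    rwa [show 128 - (k + 1) + 1 = 128 - k by omega] at this

theorem masked (l : List ℕ) (s k n : ℕ) (hs : s + k = 128) (hl : l.length = n)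
    (hb : ∀ x ∈ l, x < 2 ^ 128)
    (h : Nat.land (pack l) ((2 ^ 128 - 2 ^ s) * pack (List.replicate n 1)) = 0) :
    ∀ x ∈ l, x < 2 ^ s := by
  have e2 : List.replicate n 1 = l.map fun _ => 1 := by simp [hl]
  have h' : pack l &&& ((2 ^ 128 - 2 ^ s) * pack (List.replicate n 1)) = 0 := h
  have hp : 0 < 2 ^ s := by positivity
  rw [e2, mul_comm, pack_mul, pack_id l, pack_land _ _ _ hb (by intro x _; omega)] at h'
  intro x hx
  have := pack_eq_zero _ _ h' x hx
  simp only [one_mul] at this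
  have hx2 := hb x hx
  rw [← hs] at this hx2
  exact mask_lt _ _ _ hx2 this

theorem loop_sound (n : ℕ) (fuel : ℕ) :
    ∀ l : List ℕ, l.length = n → (∀ x ∈ l, x < 2 ^ 128) →
      loop (pack (List.replicate n 1)) ((2 ^ 128 - 2 ^ 62) * pack (List.replicate n 1))
        ((2 ^ 128 - 2 ^ 96) * pack (List.replicate n 1)) fuel (pack l) = true →
      ∀ x ∈ l, Drops x := by
  induction fuel with
  | zero => intro l _ _ h; exact absurd h (by simp [loop])
  | succ k ih =>
    intro l hl hb h
    change cond (Nat.beq (Nat.land (pack l) ((2 ^ 128 - 2 ^ 62) * pack (List.replicate n 1))) 0)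
      true (cond (Nat.beq (Nat.land (pack l) ((2 ^ 128 - 2 ^ 96) * pack (List.replicate n 1))) 0)
      (block (pack (List.replicate n 1)) (loop (pack (List.replicate n 1))
        ((2 ^ 128 - 2 ^ 62) * pack (List.replicate n 1))
        ((2 ^ 128 - 2 ^ 96) * pack (List.replicate n 1)) k) 16 (pack l)) false) = true at h
    rw [Bool.cond_eq_ite] at h
    split_ifs at h with h1
    · have := masked l 62 66 n rfl hl hb (Nat.eq_of_beq_eq_true h1)
      exact fun x hx => ⟨0, this x hx⟩
    · rw [Bool.cond_eq_ite] at h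
      split_ifs at h with h2
      have := masked l 96 32 n rfl hl hb (Nat.eq_of_beq_eq_true h2)
      exact block_sound _ n ih 16 l hl
        (fun x hx => lt_of_lt_of_le (this x hx) (Nat.pow_le_pow_right (by norm_num) (by norm_num)))
        (by norm_num) h

theorem pack_append (l : List ℕ) (x : ℕ) :
    pack (l ++ [x]) = pack l + (2 ^ 128) ^ l.length * x := by
  induction l with
  | nil => simp [pack]
  | cons y l ih =>
    simp only [List.cons_append, pack, ih, List.length_cons]
    ring

theorem ones_eq (n : ℕ) : pack (List.replicate n 1) * (2 ^ 128 - 1) = (2 ^ 128) ^ n - 1 := by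
  have : pack (List.replicate n 1) * (2 ^ 128 - 1) + 1 = (2 ^ 128) ^ n := by
    induction n with
    | zero => simp [pack]
    | succ n ih =>
      rw [List.replicate_succ, pack, pow_succ (2 ^ 128) n, ← ih]
      generalize pack (List.replicate n 1) = y
      norm_num
      ring
  exact Nat.eq_sub_of_add_eq this

theorem ramp_eq (n : ℕ) : pack (List.range n) * (2 ^ 128 - 1) +
    2 ^ 128 * pack (List.replicate n 1) = n * (2 ^ 128) ^ n := by
  induction n with
  | zero => simp [pack]
  | succ n ih =>
    rw [List.range_succ, pack_append, List.replicate_succ', pack_append, List.length_range,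
      List.length_replicate]
    calc _ = (pack (List.range n) * (2 ^ 128 - 1) + 2 ^ 128 * pack (List.replicate n 1))
          + (2 ^ 128) ^ n * n * (2 ^ 128 - 1) + 2 ^ 128 * (2 ^ 128) ^ n := by ring
      _ = (n + 1) * (2 ^ 128) ^ (n + 1) := by
        rw [ih, pow_succ (2 ^ 128) n]
        generalize (2 ^ 128) ^ n = y
        norm_num
        ring
      _ = _ := by push_cast; rfl

theorem chk_sound (L b : ℕ) (hL : b + 4096 * L < 2 ^ 128) (h : chk L b = true) :
    ∀ t < L, Drops (b + 4096 * t) := by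
  unfold chk at h
  simp only [force_eq] at h
  have hM : Nat.div (Nat.sub (Nat.pow 340282366920938463463374607431768211456 L) 1)
      340282366920938463463374607431768211455 = pack (List.replicate L 1) := by
    have e := ones_eq L
    change ((2 ^ 128) ^ L - 1) / (2 ^ 128 - 1) = _
    rw [← e]
    exact Nat.mul_div_cancel _ (by norm_num)
  rw [hM] at h
  have hR : Nat.div (Nat.sub (Nat.mul L (Nat.pow 340282366920938463463374607431768211456 L))
      (Nat.mul 340282366920938463463374607431768211456 (pack (List.replicate L 1))))
      340282366920938463463374607431768211455 = pack (List.range L) := by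
    have e := ramp_eq L
    change (L * (2 ^ 128) ^ L - 2 ^ 128 * pack (List.replicate L 1)) / (2 ^ 128 - 1) = _
    rw [← e, Nat.add_sub_cancel]
    exact Nat.mul_div_cancel _ (by norm_num)
  rw [hR] at h
  have hX : Nat.add (Nat.mul b (pack (List.replicate L 1))) (Nat.mul 4096 (pack (List.range L)))
      = pack ((List.range L).map fun t => b + 4096 * t) := by
    change b * pack (List.replicate L 1) + 4096 * pack (List.range L) = _
    have e2 : List.replicate L 1 = (List.range L).map fun _ => 1 := by simp
    rw [e2, mul_comm b, mul_comm 4096, pack_mul]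
    conv_lhs => rw [pack_id (List.range L)]
    rw [pack_mul, pack_add]
    exact pack_congr _ _ _ fun x _ => by ring
  rw [hX] at h
  intro t ht
  refine loop_sound L 30 _ (by simp) ?_ h _ (List.mem_map.2 ⟨t, by simpa using ht, rfl⟩)
  intro x hx
  obtain ⟨s, hs, rfl⟩ := List.mem_map.1 hx
  have := List.mem_range.1 hs
  omega

theorem dead_sound (c : ℕ) (fuel : ℕ) : ∀ p q, (∃ k, ∀ t, U^[k] (c + 4096 * t) = p * t + q) →
    dead fuel p q = true → ∀ t, 2 ^ 46 ≤ t → ∃ k, U^[k] (c + 4096 * t) < c + 4096 * t := by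
  induction fuel with
  | zero => intro p q _ h; exact absurd h (by simp [dead])
  | succ n ih =>
    intro p q ⟨k, hk⟩ h t ht
    have key : ∀ p' q' : ℕ, (∀ t, U (p * t + q) = p' * t + q') →
        cond (Nat.ble p' 4095 && Nat.ble q' (2 ^ 40)) true (dead n p' q') = true →
        ∃ k, U^[k] (c + 4096 * t) < c + 4096 * t := by
      intro p' q' hU h'
      have hk' : ∀ t, U^[k + 1] (c + 4096 * t) = p' * t + q' := by
        intro t
        rw [Function.iterate_succ_apply', hk, hU]
      rw [Bool.cond_eq_ite] at h'
      split_ifs at h' with h1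
      · refine ⟨k + 1, ?_⟩
        rw [hk']
        rw [Bool.and_eq_true] at h1
        have h2 := Nat.le_of_ble_eq_true h1.1
        have h3 := Nat.le_of_ble_eq_true h1.2
        have h4 : p' * t ≤ 4095 * t := Nat.mul_le_mul_right _ h2
        omega
      · exact ih p' q' ⟨k + 1, hk'⟩ h' t ht
    change cond (Nat.beq (p % 2) 0)
        (cond (Nat.beq (q % 2) 0)
          (cond (Nat.ble (p / 2) 4095 && Nat.ble (q / 2) (2 ^ 40)) true (dead n (p / 2) (q / 2)))
          (cond (Nat.ble (3 * p / 2) 4095 && Nat.ble ((3 * q + 1) / 2) (2 ^ 40)) true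
            (dead n (3 * p / 2) ((3 * q + 1) / 2))))
        false = true at h
    rw [Bool.cond_eq_ite] at h
    split_ifs at h with hp
    have hp := Nat.eq_of_beq_eq_true hp
    obtain ⟨p0, rfl⟩ : ∃ p0, p = 2 * p0 := ⟨p / 2, by omega⟩
    rw [Bool.cond_eq_ite] at h
    split_ifs at h with hq
    · have hq := Nat.eq_of_beq_eq_true hq
      refine key _ _ ?_ h
      intro t
      rw [mul_assoc, Nat.mul_div_cancel_left _ (by norm_num : 0 < 2)]
      unfold U
      generalize p0 * t = y
      split_ifs <;> omega
    · have hq : q % 2 ≠ 0 := by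
        intro h0; apply hq; rw [h0]; rfl
      refine key _ _ ?_ h
      intro t
      rw [show 3 * (2 * p0) / 2 = 3 * p0 by omega, mul_assoc, mul_assoc]
      unfold U
      generalize p0 * t = y
      split_ifs <;> omega

/-- The classes mod 4096 not settled by `dead`. -/
def live : List ℕ :=
    [27, 31, 47, 63, 71, 91, 103, 111, 127, 155, 159, 167, 191, 207, 223, 239, 251, 255, 283, 303,
    319, 327, 359, 411, 415, 447, 479, 487, 495, 511, 539, 543, 559, 603, 623, 639, 667, 671, 679,
    703, 719, 743, 751, 763, 767, 795, 799, 831, 839, 859, 871, 895, 927, 959, 991, 1007, 1023,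
    1051, 1055, 1071, 1095, 1115, 1127, 1135, 1151, 1179, 1183, 1191, 1215, 1247, 1255, 1263,
    1275, 1279, 1307, 1327, 1343, 1351, 1383, 1407, 1439, 1471, 1487, 1503, 1511, 1519, 1535,
    1563, 1567, 1583, 1627, 1639, 1663, 1691, 1695, 1727, 1743, 1767, 1775, 1791, 1819, 1863,
    1883, 1895, 1903, 1919, 1951, 1959, 1983, 2015, 2043, 2047, 2075, 2079, 2095, 2111, 2119,
    2139, 2151, 2159, 2175, 2207, 2215, 2255, 2271, 2279, 2287, 2299, 2303, 2331, 2367, 2375,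
    2407, 2431, 2459, 2463, 2495, 2511, 2527, 2535, 2543, 2559, 2607, 2651, 2663, 2671, 2687,
    2715, 2719, 2727, 2751, 2767, 2791, 2799, 2811, 2815, 2843, 2847, 2879, 2887, 2919, 2927,
    2943, 2983, 3007, 3039, 3055, 3067, 3071, 3099, 3103, 3135, 3163, 3175, 3183, 3199, 3227,
    3231, 3239, 3263, 3279, 3303, 3311, 3323, 3327, 3355, 3375, 3391, 3399, 3431, 3455, 3483,
    3487, 3519, 3535, 3551, 3567, 3583, 3611, 3615, 3631, 3687, 3695, 3711, 3739, 3743, 3751,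
    3775, 3791, 3815, 3823, 3835, 3839, 3867, 3871, 3903, 3931, 3943, 3951, 3967, 3999, 4007,
    4031, 4079, 4091, 4095]

theorem classes : (List.range 4096).all (fun c => dead 12 4096 c || live.contains c) = true := by
  decide +kernel

def Good (c : ℕ) : Prop := ∀ j < 4, chk 4864 (19 * 2 ^ 58 + c + 4096 * (4864 * j)) = true

theorem good_mk (c : ℕ)
    (h0 : chk 4864 (19 * 2 ^ 58 + c + 4096 * (4864 * 0)) = true)
    (h1 : chk 4864 (19 * 2 ^ 58 + c + 4096 * (4864 * 1)) = true)
    (h2 : chk 4864 (19 * 2 ^ 58 + c + 4096 * (4864 * 2)) = true)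
    (h3 : chk 4864 (19 * 2 ^ 58 + c + 4096 * (4864 * 3)) = true) : Good c := by
  intro j hj
  obtain rfl | rfl | rfl | rfl : j = 0 ∨ j = 1 ∨ j = 2 ∨ j = 3 := by omega
  · exact h0
  · exact h1
  · exact h2
  · exact h3

theorem all_cons (c : ℕ) (l : List ℕ) (h : Good c) (hl : ∀ x ∈ l, Good x) :
    ∀ x ∈ c :: l, Good x := by
  intro x hx
  rcases List.mem_cons.1 hx with rfl | hx
  · exact h
  · exact hl x hx

theorem all_nil : ∀ x ∈ ([] : List ℕ), Good x := by simp

set_option maxRecDepth 100000 in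
set_option maxHeartbeats 0 in
theorem live_good : ∀ c ∈ live, Good c := by
  unfold live
  repeat'
    first
    | exact all_nil
    | refine all_cons _ _ (good_mk _ ?_ ?_ ?_ ?_) ?_
    | decide +kernel

/-- No number in the interval is the least element of its own trajectory. -/
theorem interval_drops (n : ℕ) (h1 : 19 * 2 ^ 58 ≤ n) (h2 : n < 19 * 2 ^ 58 + 19 * 2 ^ 22) :
    ∃ k, U^[k] n < n := by
  have hc : n % 4096 < 4096 := Nat.mod_lt _ (by norm_num)
  have h := List.all_eq_true.1 classes (n % 4096) (List.mem_range.2 hc)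
  rw [Bool.or_eq_true] at h
  rcases h with h | h
  · have := dead_sound (n % 4096) 12 4096 (n % 4096)
      ⟨0, fun t => by simp [add_comm]⟩ h (n / 4096) (by omega)
    rwa [Nat.mod_add_div] at this
  · have hl : n % 4096 ∈ live := by simpa using h
    obtain ⟨u, hu⟩ : ∃ u, n / 4096 = 19 * 2 ^ 46 + u := ⟨n / 4096 - 19 * 2 ^ 46, by omega⟩
    have hu2 : u < 4864 * 4 := by omega
    have hj : u / 4864 < 4 := by omega
    have hg := live_good _ hl (u / 4864) hj
    have := chk_sound _ _ (by omega) hg (u % 4864) (by omega)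
    obtain ⟨k, hk⟩ := this
    have e : 19 * 2 ^ 58 + n % 4096 + 4096 * (4864 * (u / 4864)) + 4096 * (u % 4864) = n := by
      omega
    rw [e] at hk
    exact ⟨k, by omega⟩

/-- A set of odd numbers closed under `T` stays above its minimum under `U`. -/
theorem closed_iter (C : ℕ → Prop) (hodd : ∀ x, C x → Odd x) (hT : ∀ x, C x → C (T x))
    (n : ℕ) (hn : C n) (k : ℕ) : ∃ e c, C c ∧ U^[k] n = 2 ^ e * c := by
  induction k with
  | zero => exact ⟨0, n, hn, by simp⟩
  | succ k ih =>
    obtain ⟨e, c, hc, h⟩ := ih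
    rw [Function.iterate_succ_apply', h]
    cases e with
    | succ e =>
      refine ⟨e, c, hc, ?_⟩
      unfold U
      rw [pow_succ, mul_comm (2 ^ e) 2, mul_assoc]
      simp
    | zero =>
      have ho := hodd c hc
      have hd : 2 ^ padicValNat 2 (3 * c + 1) ∣ 3 * c + 1 := pow_padicValNat_dvd
      have hT' : 2 ^ padicValNat 2 (3 * c + 1) * T c = 3 * c + 1 := by
        unfold T
        exact Nat.mul_div_cancel' hd
      have hv : padicValNat 2 (3 * c + 1) ≠ 0 := by
        intro h0
        have ho' := hodd _ (hT c hc)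
        rw [h0] at hT'
        obtain ⟨a, ha⟩ := ho
        obtain ⟨b, hb⟩ := ho'
        omega
      obtain ⟨v, hv⟩ := Nat.exists_eq_succ_of_ne_zero hv
      refine ⟨v, T c, hT c hc, ?_⟩
      rw [hv, Nat.succ_eq_add_one, pow_succ, mul_comm (2 ^ v) 2, mul_assoc] at hT'
      obtain ⟨a, ha⟩ := ho
      unfold U
      simp only [pow_zero, one_mul]
      rw [if_neg (by omega), ← hT']
      simp

theorem log_two_bound : (11387806137299329585 : ℝ) < 3 * (19 * 2 ^ 58 + 19 * 2 ^ 22) * Real.log 2 := by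
  have h := Real.sum_range_le_log_div (x := 1 / 3) (by norm_num) (by norm_num) 24
  have e : ((1 : ℝ) + 1 / 3) / (1 - 1 / 3) = 2 := by norm_num
  rw [e] at h
  norm_num [Finset.sum_range_succ] at h
  norm_num
  linarith

end CollatzLane

theorem stmt_11 (m : ℕ) (hm : 1 ≤ m) (a : ℕ → ℕ)
    (hpos : ∀ i, 1 ≤ i → i ≤ m → 0 < a i)
    (hodd : ∀ i, 1 ≤ i → i ≤ m → Odd (a i))
    (hstep : ∀ i, 1 ≤ i → i < m → a (i + 1) = T (a i))
    (hloop : T (a m) = a 1)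
    (hnontriv : ∀ i, 1 ≤ i → i ≤ m → a i ≠ 1)
    (amin : ℕ)
    (hamin : amin = (Finset.Icc 1 m).inf' (Finset.nonempty_Icc.mpr hm) a)
    (hbig : 19 * 2 ^ 58 ≤ amin)
    (halpha : (m : ℝ) * Real.logb 2 (1 + 1 / (3 * (amin : ℝ))) > 1) :
    11387806137299329586 ≤ m := by
  by_contra hlt
  have hmem : ∃ i ∈ Finset.Icc 1 m, (Finset.Icc 1 m).inf' (Finset.nonempty_Icc.mpr hm) a = a i :=
    Finset.exists_mem_eq_inf' _ _
  obtain ⟨i, hi, hai⟩ := hmem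
  rw [← hamin] at hai
  have hle : ∀ j, 1 ≤ j → j ≤ m → amin ≤ a j := by
    intro j h1 h2
    rw [hamin]
    exact Finset.inf'_le _ (Finset.mem_Icc.2 ⟨h1, h2⟩)
  have hi' := Finset.mem_Icc.1 hi
  -- the analytic part: the minimum lies in a short interval
  have hupper : amin < 19 * 2 ^ 58 + 19 * 2 ^ 22 := by
    by_contra hge
    have hge' : (19 * 2 ^ 58 + 19 * 2 ^ 22 : ℝ) ≤ amin := by exact_mod_cast not_lt.1 hge
    have hapos : (0 : ℝ) < amin := lt_of_lt_of_le (by norm_num) hge'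
    have hl2 : 0 < Real.log 2 := Real.log_pos (by norm_num)
    have hb := CollatzLane.log_two_bound
    have hlog : Real.log (1 + 1 / (3 * (amin : ℝ))) ≤ 1 / (3 * (amin : ℝ)) := by
      have := Real.log_le_sub_one_of_pos (x := 1 + 1 / (3 * (amin : ℝ))) (by positivity)
      linarith
    rw [Real.logb, ← mul_div_assoc, gt_iff_lt, lt_div_iff₀ hl2, one_mul] at halpha
    have h1 : Real.log 2 < m * (1 / (3 * (amin : ℝ))) :=
      lt_of_lt_of_le halpha (mul_le_mul_of_nonneg_left hlog (by positivity))
    rw [mul_one_div, lt_div_iff₀ (by positivity)] at h1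
    have h2 : (m : ℝ) ≤ 11387806137299329585 := by
      have : m ≤ 11387806137299329585 := by omega
      exact_mod_cast this
    have h3 : Real.log 2 * (3 * (19 * 2 ^ 58 + 19 * 2 ^ 22)) ≤ Real.log 2 * (3 * (amin : ℝ)) :=
      mul_le_mul_of_nonneg_left (by linarith) hl2.le
    linarith
  -- the computational part
  obtain ⟨k, hk⟩ := CollatzLane.interval_drops amin hbig hupper
  obtain ⟨e, c, ⟨j, hj1, hj2, rfl⟩, hc⟩ := CollatzLane.closed_iter
    (fun x => ∃ j, 1 ≤ j ∧ j ≤ m ∧ x = a j)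
    (by rintro x ⟨j, h1, h2, rfl⟩; exact hodd j h1 h2)
    (by
      rintro x ⟨j, h1, h2, rfl⟩
      rcases Nat.lt_or_ge j m with h | h
      · exact ⟨j + 1, by omega, by omega, (hstep j h1 h).symm⟩
      · have : j = m := by omega
        subst this
        exact ⟨1, le_refl _, hm, hloop⟩)
    amin ⟨i, hi'.1, hi'.2, hai⟩ k
  rw [hc] at hk
  have h1 := hle j hj1 hj2
  have h2 : a j ≤ 2 ^ e * a j := Nat.le_mul_of_pos_left _ (by positivity)
  omega
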